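/- The differential operator L = -(y₁² ∂²_{y₁} - y₁y₂ ∂_{y₁}∂_{y₂} + y₂² ∂²_{y₂}) acting on smooth compactly supported functions of (y₁,y₂) ∈ (0,∞)² is a nonnegative operator with respect to the measure dy₁dy₂/(y₁³y₂³): for all such f, ∫ (L f) · f̄ dμ ≥ 0. -/

import Mathlib

/-!
In logarithmic coordinates, and after conjugating by `y₁ y₂`, the operator becomes
`1 - (D₁² - D₁ D₂ + D₂²)`, whose symbol is positive. Staying in the coordinates `y₁, y₂`, this is
integration by parts: for real `u` and `w = 1 / (y₁³ y₂³)`,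
`(L u) u w = ((y₁ u₁)² - (y₁ u₁) (y₂ u₂) + (y₂ u₂)²) w + ∂₁ P + ∂₂ Q`,
where `P, Q` are `u` times expressions smooth on the quadrant (the `u²` terms produced by
differentiating the weights cancel: `-1 - 1 + 2 = 0`). The quadratic form is nonnegative
(`sq_form_nonneg`), and the divergence integrates to zero because `P, Q` are smooth with compact
support in the open quadrant (`integral_fderiv_mul_eq_zero`). The complex case follows by adding
the inequalities for the real and imaginary parts.
-/

open Real MeasureTheory

/-- The operator `L = -(y₁² ∂²_{y₁} - y₁y₂ ∂_{y₁}∂_{y₂} + y₂² ∂²_{y₂})`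
acting on functions of two real variables. -/
noncomputable def Lop (f : ℝ → ℝ → ℂ) (y₁ y₂ : ℝ) : ℂ :=
  -(y₁ ^ 2 * deriv (fun t => deriv (fun s => f s y₂) t) y₁
    - y₁ * y₂ * deriv (fun t => deriv (fun s => f t s) y₂) y₁
    + y₂ ^ 2 * deriv (fun t => deriv (fun s => f y₁ s) t) y₂)

open Set

/-- The directional derivative of `u` along the constant vector field `v`. -/
noncomputable def dirD {E : Type*} [NormedAddCommGroup E] [NormedSpace ℝ E]
    (v : ℝ × ℝ) (u : ℝ × ℝ → E) (p : ℝ × ℝ) : E := fderiv ℝ u p v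

section Slices

variable {E : Type*} [NormedAddCommGroup E] [NormedSpace ℝ E]

lemma dirD_contDiff {u : ℝ × ℝ → E} (hu : ContDiff ℝ (⊤ : ℕ∞) u) (v : ℝ × ℝ) :
    ContDiff ℝ (⊤ : ℕ∞) (dirD v u) :=
  (hu.fderiv_right (m := (⊤ : ℕ∞)) (by simp)).clm_apply contDiff_const

lemma hasDerivAt_fst {u : ℝ × ℝ → E} {x y : ℝ} (hu : DifferentiableAt ℝ u (x, y)) :
    HasDerivAt (fun t => u (t, y)) (dirD (1, 0) u (x, y)) x :=
  hu.hasFDerivAt.comp_hasDerivAt x ((hasDerivAt_id x).prodMk (hasDerivAt_const x y))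

lemma hasDerivAt_snd {u : ℝ × ℝ → E} {x y : ℝ} (hu : DifferentiableAt ℝ u (x, y)) :
    HasDerivAt (fun t => u (x, t)) (dirD (0, 1) u (x, y)) y :=
  hu.hasFDerivAt.comp_hasDerivAt y ((hasDerivAt_const y x).prodMk (hasDerivAt_id y))

end Slices

lemma dirD_clm_comp {F : ℝ × ℝ → ℂ} (hF : ContDiff ℝ (⊤ : ℕ∞) F) (v : ℝ × ℝ) (l : ℂ →L[ℝ] ℝ) :
    dirD v (fun p => l (F p)) = fun p => l (dirD v F p) := by
  funext p
  have h := (l.hasFDerivAt (x := F p)).comp p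
    (hF.differentiable (by simp) p).hasFDerivAt
  have hfd : fderiv ℝ (fun p => l (F p)) p = l.comp (fderiv ℝ F p) := h.fderiv
  simp [dirD, hfd]

/-- If `u` has compact support in the open quadrant, then `u * W` is differentiable, and each of its
directional derivatives is integrable over the quadrant with integral zero; `W` need only be smooth on the open quadrant, since the product
extends by zero. -/
lemma integral_fderiv_mul_eq_zero {u W : ℝ × ℝ → ℝ} (hu : ContDiff ℝ (⊤ : ℕ∞) u)
    (hc : HasCompactSupport u)
    (hs : tsupport u ⊆ Ioi (0 : ℝ) ×ˢ Ioi (0 : ℝ))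
    (hW : ∀ p ∈ Ioi (0 : ℝ) ×ˢ Ioi (0 : ℝ), ContDiffAt ℝ 1 W p) (v : ℝ × ℝ) :
    Differentiable ℝ (fun p => u p * W p) ∧
    IntegrableOn (dirD v fun p => u p * W p) (Ioi (0 : ℝ) ×ˢ Ioi (0 : ℝ)) ∧
    ∫ p in Ioi (0 : ℝ) ×ˢ Ioi (0 : ℝ), dirD v (fun p => u p * W p) p = 0 := by
  set G : ℝ × ℝ → ℝ := fun p => u p * W p with hG
  have hsub : tsupport G ⊆ tsupport u := tsupport_mul_subset_left
  have hGc : HasCompactSupport G := hc.mul_right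
  have hGd : ContDiff ℝ 1 G := by
    refine contDiff_iff_contDiffAt.2 fun p => ?_
    by_cases hp : p ∈ tsupport G
    · exact (hu.contDiffAt.of_le (by exact_mod_cast le_top)).mul (hW p (hs (hsub hp)))
    · exact contDiffAt_const.congr_of_eventuallyEq (notMem_tsupport_iff_eventuallyEq.1 hp)
  have hGdiff : Differentiable ℝ G := hGd.differentiable (by simp)
  have hcont : Continuous (dirD v G) :=
    (hGd.continuous_fderiv (by simp)).clm_apply continuous_const
  have hint : Integrable (dirD v G) :=
    hcont.integrable_of_hasCompactSupport (hGc.fderiv_apply (𝕜 := ℝ) v)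
  refine ⟨hGdiff, hint.integrableOn, ?_⟩
  rw [setIntegral_eq_integral_of_forall_compl_eq_zero]
  · have h := integral_mul_fderiv_eq_neg_fderiv_mul_of_integrable (𝕜 := ℝ)
      (μ := (volume : Measure (ℝ × ℝ))) (f := fun _ => (1 : ℝ)) (g := G) (v := v)
      (by simp) (by simp only [one_mul]; exact hint)
      (by simpa using hGd.continuous.integrable_of_hasCompactSupport hGc)
      (fun _ _ => differentiableAt_const _) (fun p _ => hGdiff p)
    simpa [dirD] using h
  · intro p hp
    by_contra hne
    exact hp (hs (hsub (tsupport_fderiv_apply_subset ℝ v (subset_tsupport _ hne))))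

lemma sq_form_nonneg (a b : ℝ) : 0 ≤ a ^ 2 - a * b + b ^ 2 := by
  nlinarith [sq_nonneg (a - b), sq_nonneg a, sq_nonneg b]

/-- The density `(L u) u / (y₁³ y₂³)` for real `u`. -/
noncomputable def energy (u : ℝ × ℝ → ℝ) (p : ℝ × ℝ) : ℝ :=
  -(p.1 ^ 2 * dirD (1, 0) (dirD (1, 0) u) p - p.1 * p.2 * dirD (1, 0) (dirD (0, 1) u) p
    + p.2 ^ 2 * dirD (0, 1) (dirD (0, 1) u) p) * u p / (p.1 ^ 3 * p.2 ^ 3)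

/-- The energy density dominates a divergence `R` of total integral zero. -/
lemma exists_divergence_le_energy {u : ℝ × ℝ → ℝ} (hu : ContDiff ℝ (⊤ : ℕ∞) u)
    (hc : HasCompactSupport u)
    (hs : tsupport u ⊆ Ioi (0 : ℝ) ×ˢ Ioi (0 : ℝ)) :
    ∃ R : ℝ × ℝ → ℝ, IntegrableOn R (Ioi (0 : ℝ) ×ˢ Ioi (0 : ℝ)) ∧
      ∫ p in Ioi (0 : ℝ) ×ˢ Ioi (0 : ℝ), R p = 0 ∧
      ∀ p ∈ Ioi (0 : ℝ) ×ˢ Ioi (0 : ℝ), R p ≤ energy u p := by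
  have h1 := dirD_contDiff hu (1, 0)
  have h2 := dirD_contDiff hu (0, 1)
  have hle : (1 : WithTop ℕ∞) ≤ ((⊤ : ℕ∞) : WithTop ℕ∞) := by exact_mod_cast le_top
  have d0 : Differentiable ℝ u := hu.differentiable (by simp)
  have d1 : Differentiable ℝ (dirD (1, 0) u) := h1.differentiable (by simp)
  have d2 : Differentiable ℝ (dirD (0, 1) u) := h2.differentiable (by simp)
  let W : ℝ × ℝ → ℝ := fun p => -dirD (1, 0) u p / (p.1 * p.2 ^ 3)
    - u p / (2 * p.1 ^ 2 * p.2 ^ 3) + dirD (0, 1) u p / (p.1 ^ 2 * p.2 ^ 2)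
  let V : ℝ × ℝ → ℝ := fun p => -dirD (0, 1) u p / (p.1 ^ 3 * p.2)
    + u p / (2 * p.1 ^ 3 * p.2 ^ 2)
  have hW : ∀ p ∈ Ioi (0 : ℝ) ×ˢ Ioi (0 : ℝ), ContDiffAt ℝ 1 W p := by
    rintro ⟨x, y⟩ ⟨hx, hy⟩
    have hx : x ≠ 0 := ne_of_gt hx
    have hy : y ≠ 0 := ne_of_gt hy
    refine ((ContDiffAt.div (h1.contDiffAt.of_le hle).neg (by fun_prop) (by simp [hx, hy])).sub
      (ContDiffAt.div (hu.contDiffAt.of_le hle) (by fun_prop) (by simp [hx, hy]))).add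
      (ContDiffAt.div (h2.contDiffAt.of_le hle) (by fun_prop) (by simp [hx, hy]))
  have hV : ∀ p ∈ Ioi (0 : ℝ) ×ˢ Ioi (0 : ℝ), ContDiffAt ℝ 1 V p := by
    rintro ⟨x, y⟩ ⟨hx, hy⟩
    have hx : x ≠ 0 := ne_of_gt hx
    have hy : y ≠ 0 := ne_of_gt hy
    refine (ContDiffAt.div (h2.contDiffAt.of_le hle).neg (by fun_prop) (by simp [hx, hy])).add
      (ContDiffAt.div (hu.contDiffAt.of_le hle) (by fun_prop) (by simp [hx, hy]))
  obtain ⟨dP, iP, zP⟩ := integral_fderiv_mul_eq_zero hu hc hs hW (1, 0)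
  obtain ⟨dQ, iQ, zQ⟩ := integral_fderiv_mul_eq_zero hu hc hs hV (0, 1)
  refine ⟨fun p => dirD (1, 0) (fun p => u p * W p) p + dirD (0, 1) (fun p => u p * V p) p,
    iP.add iQ, by rw [integral_add iP iQ, zP, zQ, add_zero], ?_⟩
  rintro ⟨x, y⟩ ⟨hx, hy⟩
  have hx : 0 < x := hx
  have hy : 0 < y := hy
  have eP := (hasDerivAt_fst (dP (x, y))).unique
    ((hasDerivAt_fst (d0 (x, y))).mul
      ((((hasDerivAt_fst (d1 (x, y))).neg.div ((hasDerivAt_id x).mul_const (y ^ 3))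
        (by simp [hx.ne', hy.ne'])).sub
        ((hasDerivAt_fst (d0 (x, y))).div
          ((((hasDerivAt_id x).pow 2).const_mul 2).mul_const (y ^ 3)) (by simp [hx.ne', hy.ne']))).add
        ((hasDerivAt_fst (d2 (x, y))).div
          (((hasDerivAt_id x).pow 2).mul_const (y ^ 2)) (by simp [hx.ne', hy.ne']))))
  have eQ := (hasDerivAt_snd (dQ (x, y))).unique
    ((hasDerivAt_snd (d0 (x, y))).mul
      (((hasDerivAt_snd (d2 (x, y))).neg.div ((hasDerivAt_id y).const_mul (x ^ 3))
        (by simp [hx.ne', hy.ne'])).add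
        ((hasDerivAt_snd (d0 (x, y))).div
          (((hasDerivAt_id y).pow 2).const_mul (2 * x ^ 3)) (by simp [hx.ne', hy.ne']))))
  have key : energy u (x, y) - (dirD (1, 0) (fun p => u p * W p) (x, y)
      + dirD (0, 1) (fun p => u p * V p) (x, y))
      = ((x * dirD (1, 0) u (x, y)) ^ 2
        - (x * dirD (1, 0) u (x, y)) * (y * dirD (0, 1) u (x, y))
        + (y * dirD (0, 1) u (x, y)) ^ 2) / (x ^ 3 * y ^ 3) := by
    rw [eP, eQ]
    simp only [energy, W, V, Pi.neg_apply, Pi.pow_apply, id]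
    field_simp
    push_cast
    ring
  have hnn : 0 ≤ ((x * dirD (1, 0) u (x, y)) ^ 2
        - (x * dirD (1, 0) u (x, y)) * (y * dirD (0, 1) u (x, y))
        + (y * dirD (0, 1) u (x, y)) ^ 2) / (x ^ 3 * y ^ 3) :=
    div_nonneg (sq_form_nonneg _ _) (by positivity)
  show _ + _ ≤ _
  linarith

/-- Pointwise, the real part of the complex density splits into the real energies of the real and
imaginary parts. -/
lemma re_density (f : ℝ → ℝ → ℂ)
    (hf : ContDiff ℝ (⊤ : ℕ∞) (fun p : ℝ × ℝ => f p.1 p.2)) (p : ℝ × ℝ) :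
    (Lop f p.1 p.2 * (starRingEnd ℂ) (f p.1 p.2) / (p.1 ^ 3 * p.2 ^ 3)).re
      = energy (fun p => Complex.reCLM (f p.1 p.2)) p
        + energy (fun p => Complex.imCLM (f p.1 p.2)) p := by
  obtain ⟨x, y⟩ := p
  set F : ℝ × ℝ → ℂ := fun p => f p.1 p.2 with hF
  have h1 := dirD_contDiff hf (1, 0)
  have h2 := dirD_contDiff hf (0, 1)
  have e1 : ∀ t y, deriv (fun s => f s y) t = dirD (1, 0) F (t, y) := fun t y =>
    (hasDerivAt_fst (u := F) (hf.differentiable (by simp) (t, y))).deriv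
  have e2 : ∀ x t, deriv (fun s => f x s) t = dirD (0, 1) F (x, t) := fun x t =>
    (hasDerivAt_snd (u := F) (hf.differentiable (by simp) (x, t))).deriv
  have hL : Lop f x y = -((x : ℂ) ^ 2 * dirD (1, 0) (dirD (1, 0) F) (x, y)
      - x * y * dirD (1, 0) (dirD (0, 1) F) (x, y)
      + (y : ℂ) ^ 2 * dirD (0, 1) (dirD (0, 1) F) (x, y)) := by
    simp only [Lop, e1, e2]
    rw [(hasDerivAt_fst (h1.differentiable (by simp) (x, y))).deriv,
      (hasDerivAt_fst (h2.differentiable (by simp) (x, y))).deriv,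
      (hasDerivAt_snd (h2.differentiable (by simp) (x, y))).deriv]
  have hd : ((x : ℂ) ^ 3 * (y : ℂ) ^ 3) = ((x ^ 3 * y ^ 3 : ℝ) : ℂ) := by push_cast; rfl
  have ex : ((x : ℂ) ^ 2) = ((x ^ 2 : ℝ) : ℂ) := by push_cast; rfl
  have ey : ((y : ℂ) ^ 2) = ((y ^ 2 : ℝ) : ℂ) := by push_cast; rfl
  have exy : ((x : ℂ) * y) = ((x * y : ℝ) : ℂ) := by push_cast; rfl
  have hE : ∀ l : ℂ →L[ℝ] ℝ, energy (fun p => l (F p)) (x, y)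
      = -(x ^ 2 * l (dirD (1, 0) (dirD (1, 0) F) (x, y))
        - x * y * l (dirD (1, 0) (dirD (0, 1) F) (x, y))
        + y ^ 2 * l (dirD (0, 1) (dirD (0, 1) F) (x, y))) * l (F (x, y)) / (x ^ 3 * y ^ 3) := by
    intro l
    simp only [energy, dirD_clm_comp hf, dirD_clm_comp h1, dirD_clm_comp h2]
  change (Lop f x y * (starRingEnd ℂ) (F (x, y)) / ((x : ℂ) ^ 3 * (y : ℂ) ^ 3)).re
    = energy (fun p => Complex.reCLM (F p)) (x, y) + energy (fun p => Complex.imCLM (F p)) (x, y)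
  rw [hE, hE, hL, hd, ex, ey, exy, Complex.div_ofReal_re, ← add_div]
  congr 1
  simp only [Complex.mul_re, Complex.neg_re, Complex.neg_im, Complex.add_re, Complex.add_im,
    Complex.sub_re, Complex.sub_im, Complex.mul_im, Complex.ofReal_re,
    Complex.ofReal_im,
    Complex.conj_re, Complex.conj_im, Complex.reCLM_apply, Complex.imCLM_apply]
  ring

theorem stmt_9 (f : ℝ → ℝ → ℂ)
    (hf : ContDiff ℝ (⊤ : ℕ∞) (fun p : ℝ × ℝ => f p.1 p.2))
    (hsupp : HasCompactSupport (fun p : ℝ × ℝ => f p.1 p.2))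
    (hsupp' : tsupport (fun p : ℝ × ℝ => f p.1 p.2) ⊆ Set.Ioi 0 ×ˢ Set.Ioi 0) :
    0 ≤ (∫ p in (Set.Ioi (0:ℝ) ×ˢ Set.Ioi (0:ℝ)),
      Lop f p.1 p.2 * (starRingEnd ℂ) (f p.1 p.2) / (p.1 ^ 3 * p.2 ^ 3)).re := by
  have hl : ∀ l : ℂ →L[ℝ] ℝ, ∃ R : ℝ × ℝ → ℝ, IntegrableOn R (Ioi (0 : ℝ) ×ˢ Ioi (0 : ℝ)) ∧
      ∫ p in Ioi (0 : ℝ) ×ˢ Ioi (0 : ℝ), R p = 0 ∧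
      ∀ p ∈ Ioi (0 : ℝ) ×ˢ Ioi (0 : ℝ), R p ≤ energy (fun p => l (f p.1 p.2)) p := fun l =>
    exists_divergence_le_energy (l.contDiff.comp hf) (hsupp.comp_left (map_zero l))
      ((tsupport_comp_subset (map_zero l) _).trans hsupp')
  obtain ⟨R, iR, zR, hR⟩ := hl Complex.reCLM
  obtain ⟨S, iS, zS, hS⟩ := hl Complex.imCLM
  -- A non-integrable integrand would have integral `0`, so integrability need not be established.
  by_cases hI : IntegrableOn (fun p : ℝ × ℝ => Lop f p.1 p.2 * (starRingEnd ℂ) (f p.1 p.2) /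
      ((p.1 : ℂ) ^ 3 * (p.2 : ℂ) ^ 3)) (Ioi (0 : ℝ) ×ˢ Ioi (0 : ℝ))
  · have hre := integral_re hI
    change _ = Complex.re _ at hre
    rw [← hre]
    calc (0 : ℝ) = ∫ p in Ioi (0 : ℝ) ×ˢ Ioi (0 : ℝ), (R p + S p) := by
          rw [integral_add iR iS, zR, zS, add_zero]
      _ ≤ _ := setIntegral_mono_on (iR.add iS) hI.re (measurableSet_Ioi.prod measurableSet_Ioi)
          fun p hp => (add_le_add (hR p hp) (hS p hp)).trans_eq (re_density f hf p).symm
  · rw [integral_undef hI, Complex.zero_re]
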